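/- Let G be a countable amenable group, S a Følner sequence, and A, B ⊆ G with d̄_S(A) ≥ α > 0 and BD(B) ≥ β > 0. Then there exist a real number s > 0 and a finite set E ⊆ G with |E| ≤ 1/(αβ) − 1/α + 1 such that EBA is S-thick of level s: for every finite L ⊆ G, the set {x ∈ G : Lx ⊆ EBA} has upper S-density at least s. -/

import Mathlib

open Filter Pointwise
open scoped symmDiff Classical

variable {G : Type*}

/-- Upper density of `A` along the sequence of finite sets `S`. -/
noncomputable def upperDens (S : ℕ → Finset G) (A : Set G) : ℝ :=
  limsup (fun n => (((S n).filter (· ∈ A)).card : ℝ) / ((S n).card : ℝ)) atTop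

/-- Lower density of `A` along the sequence of finite sets `S`. -/
noncomputable def lowerDens (S : ℕ → Finset G) (A : Set G) : ℝ :=
  liminf (fun n => (((S n).filter (· ∈ A)).card : ℝ) / ((S n).card : ℝ)) atTop

/-- `S` is a (left) Følner sequence for `G`. -/
def IsFolner [Group G] (S : ℕ → Finset G) : Prop :=
  (∀ n, (S n).Nonempty) ∧
  ∀ x : G, Tendsto (fun n => (((x • S n) ∆ S n).card : ℝ) / ((S n).card : ℝ)) atTop (nhds 0)

/-- (Left) Banach density: supremum of upper densities over all Følner sequences. -/
noncomputable def banachDens [Group G] (A : Set G) : ℝ :=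
  sSup {d : ℝ | ∃ S : ℕ → Finset G, IsFolner S ∧ d = upperDens S A}

/-! Were `EBA` thick at no positive level for every small `E`, there would be a finite set `L_E` for
each such `E` with `{x | L_E x ⊆ EBA}` of tiny upper density; as `G` is countable, these exceptional
sets have small total density. Averaging over `S`, the sets `D = B ∩ xA⁻¹` have relative density
about `αβ` in a finite set `T_n` where `B` has density about `β`, for a set of `x` of positive upper
density, so some `x = x_n` lies outside the first `n` exceptional sets. A maximal family `F` such
that, along an ultrafilter, the translates `f D_n`, `f ∈ F`, are disjoint from `B` and from each
other satisfies `|F| αβ + β ≤ 1` (the approximations cost nothing, as `|F|` is an integer), and by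
maximality every translate `g D_n` meets `EB` for `E = F ∪ {1}`, i.e. `g x_n ∈ EBA`. Taking `g` in
`L_E` contradicts the choice of `x_n`. -/

section RelDens

open scoped Finset BigOperators

/-- The relative density `|T ∩ A| / |T|` of a set `A` in a finite set `T` (with value `0` when `T`
is empty); `upperDens S A` is by definition the upper limit of `relDens (S n) A`. -/
noncomputable def relDens (T : Finset G) (A : Set G) : ℝ :=
  (#(T.filter (· ∈ A)) : ℝ) / #T

variable {T : Finset G} {A B : Set G}

lemma relDens_eq_expect (T : Finset G) (A : Set G) :
    relDens T A = 𝔼 x ∈ T, if x ∈ A then (1 : ℝ) else 0 := by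
  rw [relDens, Finset.expect_eq_sum_div_card, Finset.sum_boole]

lemma relDens_nonneg (T : Finset G) (A : Set G) : 0 ≤ relDens T A := by
  unfold relDens
  positivity

lemma relDens_le_one (T : Finset G) (A : Set G) : relDens T A ≤ 1 :=
  div_le_one_of_le₀ (by exact_mod_cast Finset.card_filter_le _ _) (by positivity)

@[simp]
lemma relDens_empty (T : Finset G) : relDens T ∅ = 0 := by
  simp [relDens]

lemma relDens_mono (T : Finset G) (h : A ⊆ B) : relDens T A ≤ relDens T B := by
  unfold relDens
  gcongr

lemma nonempty_of_relDens_pos (h : 0 < relDens T A) : A.Nonempty := by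
  rw [Set.nonempty_iff_ne_empty]
  rintro rfl
  simp at h

lemma relDens_union_le (T : Finset G) (A B : Set G) :
    relDens T (A ∪ B) ≤ relDens T A + relDens T B := by
  simp only [relDens, Set.mem_union, Finset.filter_or, ← add_div]
  gcongr
  exact_mod_cast Finset.card_union_le _ _

lemma relDens_union_of_disjoint (T : Finset G) (h : Disjoint A B) :
    relDens T (A ∪ B) = relDens T A + relDens T B := by
  have hdisj : Disjoint (T.filter (· ∈ A)) (T.filter (· ∈ B)) :=
    Finset.disjoint_filter.2 fun _ _ hA hB ↦ Set.disjoint_left.1 h hA hB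
  simp only [relDens, Set.mem_union, Finset.filter_or, Finset.card_union_of_disjoint hdisj,
    Nat.cast_add, add_div]

lemma relDens_biUnion_of_pairwiseDisjoint {ι : Type*} (T : Finset G) (s : Finset ι)
    {A : ι → Set G} (h : (s : Set ι).PairwiseDisjoint A) :
    relDens T (⋃ i ∈ s, A i) = ∑ i ∈ s, relDens T (A i) := by
  induction s using Finset.induction_on with
  | empty => simp
  | insert i s hi ih =>
    rw [Finset.coe_insert, Set.pairwiseDisjoint_insert] at h
    have hdisj : Disjoint (A i) (⋃ j ∈ s, A j) :=
      Set.disjoint_iUnion₂_right.2 fun j hj ↦ h.2 j hj (ne_of_mem_of_not_mem hj hi).symm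
    rw [Finset.set_biUnion_insert, relDens_union_of_disjoint T hdisj, ih h.1,
      Finset.sum_insert hi]

lemma expect_relDens_comm {X : Type*} (S : Finset X) (T : Finset G) (R : X → G → Prop) :
    𝔼 x ∈ S, relDens T {t | R x t} = 𝔼 t ∈ T, relDens S {x | R x t} := by
  simp only [relDens_eq_expect, Set.mem_ofPred_eq]
  exact Finset.expect_comm _ _ _

lemma expect_le_add_relDens (hT : T.Nonempty) {f : G → ℝ} {c : ℝ} (hc : 0 ≤ c)
    (hf : ∀ x ∈ T, f x ≤ 1) : 𝔼 x ∈ T, f x ≤ c + relDens T {x | c ≤ f x} := by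
  rw [relDens_eq_expect, ← Finset.expect_const hT c, ← Finset.expect_add_distrib,
    Finset.expect_const hT c]
  refine Finset.expect_le_expect fun x hx ↦ ?_
  simp only [Set.mem_ofPred_eq]
  split_ifs with h
  · linarith [hf x hx]
  · linarith

lemma relDens_le_relDens_smul_add [Group G] (T : Finset G) (A : Set G) (x : G) :
    relDens T A ≤ relDens T (x • A) + #((x • T) ∆ T) / #T := by
  have hsub : x • T.filter (· ∈ A) ⊆ T.filter (· ∈ x • A) ∪ (x • T) ∆ T := by
    intro y hy
    obtain ⟨a, ha, rfl⟩ := Finset.mem_smul_finset.1 hy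
    obtain ⟨haT, haA⟩ := Finset.mem_filter.1 ha
    by_cases hT : x • a ∈ T
    · exact Finset.mem_union_left _ (Finset.mem_filter.2 ⟨hT, Set.smul_mem_smul_set haA⟩)
    · exact Finset.mem_union_right _
        (Finset.mem_symmDiff.2 (.inl ⟨Finset.smul_mem_smul_finset haT, hT⟩))
  have hcard := (Finset.card_le_card hsub).trans (Finset.card_union_le _ _)
  rw [Finset.card_smul_finset] at hcard
  rw [relDens, relDens, ← add_div]
  gcongr
  exact_mod_cast hcard

end RelDens

section UpperDens

variable (S : ℕ → Finset G) (A B : Set G)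

lemma isBoundedUnder_le_relDens : IsBoundedUnder (· ≤ ·) atTop fun n ↦ relDens (S n) A :=
  isBoundedUnder_of ⟨1, fun n ↦ relDens_le_one (S n) A⟩

lemma isBoundedUnder_ge_relDens : IsBoundedUnder (· ≥ ·) atTop fun n ↦ relDens (S n) A :=
  isBoundedUnder_of ⟨0, fun n ↦ relDens_nonneg (S n) A⟩

variable {S A B}

lemma frequently_lt_relDens {a : ℝ} (h : a < upperDens S A) :
    ∃ᶠ n in atTop, a < relDens (S n) A :=
  frequently_lt_of_lt_limsup (isBoundedUnder_ge_relDens S A).isCoboundedUnder_le h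

lemma eventually_relDens_lt {a : ℝ} (h : upperDens S A < a) :
    ∀ᶠ n in atTop, relDens (S n) A < a :=
  eventually_lt_of_limsup_lt h (isBoundedUnder_le_relDens S A)

lemma upperDens_mono (h : A ⊆ B) : upperDens S A ≤ upperDens S B :=
  limsup_le_limsup (.of_forall fun n ↦ relDens_mono (S n) h)
    (isBoundedUnder_ge_relDens S A).isCoboundedUnder_le (isBoundedUnder_le_relDens S B)

variable (S A B)

@[simp]
lemma upperDens_empty : upperDens S ∅ = 0 := by
  simp [upperDens]

lemma upperDens_nonneg : 0 ≤ upperDens S A :=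
  (upperDens_empty S).ge.trans (upperDens_mono (Set.empty_subset A))

lemma upperDens_union_le : upperDens S (A ∪ B) ≤ upperDens S A + upperDens S B :=
  (limsup_le_limsup (.of_forall fun n ↦ relDens_union_le (S n) A B)
    (isBoundedUnder_ge_relDens S _).isCoboundedUnder_le
    (isBoundedUnder_le_add (isBoundedUnder_le_relDens S A) (isBoundedUnder_le_relDens S B))).trans
  (limsup_add_le (isBoundedUnder_ge_relDens S A) (isBoundedUnder_le_relDens S A)
    (isBoundedUnder_ge_relDens S B).isCoboundedUnder_le (isBoundedUnder_le_relDens S B))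

lemma upperDens_biUnion_le {ι : Type*} (s : Finset ι) (A : ι → Set G) :
    upperDens S (⋃ i ∈ s, A i) ≤ ∑ i ∈ s, upperDens S (A i) := by
  induction s using Finset.induction_on with
  | empty => simp
  | insert i s hi ih =>
    rw [Finset.set_biUnion_insert, Finset.sum_insert hi]
    exact (upperDens_union_le S _ _).trans (by gcongr)

variable {S}

-- A substitute for countable subadditivity, which `upperDens S` lacks.
lemma exists_forall_le_upperDens {ι κ : Type*} [Countable ι] {X : ℕ → Set G} {δ : ℝ} (hδ : 0 < δ)
    (hX : ∀ n, δ ≤ upperDens S (X n)) (Q : ι → κ → Set G)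
    (hQ : ∀ x : ℕ → G, (∀ n, x n ∈ X n) → ∃ i, ∀ k, ∃ᶠ n in atTop, x n ∈ Q i k) :
    ∃ s > 0, ∃ i, ∀ k, s ≤ upperDens S (Q i k) := by
  by_contra! hsmall
  obtain ⟨w, hw, hsum⟩ :=
    (Set.countable_univ (α := ι)).exists_pos_forall_sum_le (half_pos hδ)
  choose k hk using fun i ↦ hsmall (w i) (hw i) i
  obtain ⟨u, hu⟩ := exists_injective_nat ι
  have hfin (n : ℕ) : {i | u i < n}.Finite := (Set.finite_Iio n).preimage hu.injOn
  have havoid (n : ℕ) : ∃ x ∈ X n, ∀ i, u i < n → x ∉ Q i (k i) := by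
    by_contra! hcover
    have hsub : X n ⊆ ⋃ i ∈ (hfin n).toFinset, Q i (k i) := by
      intro x hx
      obtain ⟨i, hi, hxi⟩ := hcover x hx
      simp only [Set.Finite.mem_toFinset, Set.mem_iUnion]
      exact ⟨i, hi, hxi⟩
    have : δ ≤ δ / 2 := calc
      δ ≤ upperDens S (X n) := hX n
      _ ≤ upperDens S (⋃ i ∈ (hfin n).toFinset, Q i (k i)) := upperDens_mono hsub
      _ ≤ ∑ i ∈ (hfin n).toFinset, upperDens S (Q i (k i)) := upperDens_biUnion_le ..
      _ ≤ ∑ i ∈ (hfin n).toFinset, w i := Finset.sum_le_sum fun i _ ↦ (hk i).le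
      _ ≤ δ / 2 := hsum _ (Set.subset_univ _)
    linarith
  choose x hxX hxQ using havoid
  obtain ⟨i, hi⟩ := hQ x hxX
  obtain ⟨n, hn, hlt⟩ := ((hi (k i)).and_eventually (eventually_gt_atTop (u i))).exists
  exact hxQ n i hlt hn

end UpperDens

section Folner

open scoped Finset BigOperators

variable [Group G] {S T : ℕ → Finset G} {A B : Set G} {b c : ℝ}

namespace IsFolner

lemma comp_strictMono (hS : IsFolner S) {φ : ℕ → ℕ} (hφ : StrictMono φ) : IsFolner (S ∘ φ) :=
  ⟨fun n ↦ hS.1 (φ n), fun x ↦ (hS.2 x).comp hφ.tendsto_atTop⟩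

lemma eventually_relDens_le_smul_add (hS : IsFolner S) (F : Finset G) {η : ℝ} (hη : 0 < η) :
    ∀ᶠ n in atTop, ∀ x ∈ F, ∀ A : Set G, relDens (S n) A ≤ relDens (S n) (x • A) + η := by
  rw [eventually_all_finset]
  intro x _
  filter_upwards [(hS.2 x).eventually_le_const hη] with n hn A
  exact (relDens_le_relDens_smul_add (S n) A x).trans (by gcongr)

lemma upperDens_mul_relDens_le (hS : IsFolner S) (A B : Set G) (T : Finset G) (hc : 0 ≤ c) :
    upperDens S A * relDens T B ≤
      c + upperDens S {x | c ≤ relDens T (B ∩ x • A⁻¹)} := by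
  set X : Set G := {x | c ≤ relDens T (B ∩ x • A⁻¹)}
  set b := relDens T B
  have key {η : ℝ} (hη : 0 < η) :
      (upperDens S A - 2 * η) * b ≤ c + (upperDens S X + η) := by
    have hA : upperDens S A - η < upperDens S A := by linarith
    have hX : upperDens S X < upperDens S X + η := by linarith
    obtain ⟨n, hAn, hXn, htrans⟩ := ((frequently_lt_relDens hA).and_eventually
      ((eventually_relDens_lt hX).and (hS.eventually_relDens_le_smul_add T hη))).exists
    have hslice (t : G) (ht : t ∈ T) : (upperDens S A - 2 * η) * (if t ∈ B then 1 else 0) ≤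
        relDens (S n) {x | t ∈ B ∩ x • A⁻¹} := by
      split_ifs with htB
      · have : {x | t ∈ B ∩ x • A⁻¹} = t • A := by
          ext x
          simp [htB, Set.mem_smul_set_iff_inv_smul_mem]
        rw [this]
        linarith [htrans t ht A]
      · simpa using relDens_nonneg (S n) _
    calc (upperDens S A - 2 * η) * b
        = 𝔼 t ∈ T, (upperDens S A - 2 * η) * (if t ∈ B then 1 else 0) := by
          rw [← Finset.mul_expect, ← relDens_eq_expect]
      _ ≤ 𝔼 t ∈ T, relDens (S n) {x | t ∈ B ∩ x • A⁻¹} := Finset.expect_le_expect hslice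
      _ = 𝔼 x ∈ S n, relDens T (B ∩ x • A⁻¹) :=
          (expect_relDens_comm (S n) T fun x t ↦ t ∈ B ∩ x • A⁻¹).symm
      _ ≤ c + relDens (S n) X :=
          expect_le_add_relDens (hS.1 n) hc fun x _ ↦ relDens_le_one _ _
      _ ≤ c + (upperDens S X + η) := by gcongr
  refine le_of_forall_pos_le_add fun ε hε ↦ ?_
  have := key (η := ε / 3) (by positivity)
  nlinarith [relDens_le_one T B]

end IsFolner

lemma exists_isFolner_forall_le_relDens (hb : 0 ≤ b) (h : b < banachDens B) :
    ∃ T : ℕ → Finset G, IsFolner T ∧ ∀ n, b ≤ relDens (T n) B := by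
  have hne : {d : ℝ | ∃ S : ℕ → Finset G, IsFolner S ∧ d = upperDens S B}.Nonempty := by
    rw [Set.nonempty_iff_ne_empty]
    intro hempty
    rw [banachDens, hempty, Real.sSup_empty] at h
    linarith
  obtain ⟨_, ⟨T, hT, rfl⟩, hbT⟩ := exists_lt_of_lt_csSup hne h
  obtain ⟨φ, hφ, hφT⟩ := extraction_of_frequently_atTop (frequently_lt_relDens hbT)
  exact ⟨T ∘ φ, hT.comp_strictMono hφ, fun n ↦ (hφT n).le⟩

/-- `F` is a packing of translates of `D` off `B`: the translates `f • D`, for `f ∈ F`, are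
pairwise disjoint and disjoint from `B`. Maximality of a packing turns it into a covering by
translates of `B`. -/
def IsPacking (B D : Set G) (F : Finset G) : Prop :=
  (F : Set G).PairwiseDisjoint (· • D) ∧ ∀ f ∈ F, Disjoint (f • D) B

lemma isPacking_empty (B D : Set G) : IsPacking B D ∅ := by
  simp [IsPacking]

lemma IsPacking.insert {B D : Set G} {F : Finset G} {g : G} (hF : IsPacking B D F) (hDB : D ⊆ B)
    (hg : ∀ e ∈ insert 1 F, Disjoint (g • D) (e • B)) : IsPacking B D (insert g F) := by
  rw [Finset.forall_mem_insert, one_smul] at hg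
  constructor
  · rw [Finset.coe_insert, Set.pairwiseDisjoint_insert]
    exact ⟨hF.1, fun f hf _ ↦ (hg.2 f hf).mono_right (Set.smul_set_mono hDB)⟩
  · exact Finset.forall_mem_insert .. |>.2 ⟨hg.1, hF.2⟩

lemma mem_mul_mul_inv_iff {D E : Set G} {g : G} :
    g ∈ E * B * D⁻¹ ↔ ∃ e ∈ E, ¬Disjoint (g • D) (e • B) := by
  simp only [Set.not_disjoint_iff, Set.mem_smul_set_iff_inv_smul_mem, smul_eq_mul]
  constructor
  · rintro ⟨_, ⟨e, he, b, hb, rfl⟩, d, hd, rfl⟩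
    exact ⟨e, he, e * b, by simpa [mul_assoc] using hd, by simpa using hb⟩
  · rintro ⟨e, he, y, hyD, hyB⟩
    exact ⟨y, ⟨e, he, e⁻¹ * y, hyB, by group⟩, y⁻¹ * g, by simpa using hyD, by simp⟩

lemma IsFolner.card_mul_add_le_one (hT : IsFolner T) {D : ℕ → Set G} {F : Finset G}
    (hF : ∃ᶠ n in atTop, IsPacking B (D n) F) (hB : ∀ n, b ≤ relDens (T n) B)
    (hD : ∀ n, c ≤ relDens (T n) (D n)) : #F * c + b ≤ 1 := by
  have key {η : ℝ} (hη : 0 < η) : #F * (c - η) + b ≤ 1 := by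
    obtain ⟨n, hFn, htrans⟩ :=
      (hF.and_eventually (hT.eventually_relDens_le_smul_add F hη)).exists
    have hdisj : Disjoint (⋃ f ∈ F, f • D n) B := Set.disjoint_iUnion₂_left.2 hFn.2
    have hsum : #F * (c - η) ≤ ∑ f ∈ F, relDens (T n) (f • D n) := by
      rw [← nsmul_eq_mul]
      exact Finset.card_nsmul_le_sum _ _ _ fun f hf ↦ by linarith [htrans f hf (D n), hD n]
    calc #F * (c - η) + b
        ≤ ∑ f ∈ F, relDens (T n) (f • D n) + relDens (T n) B := add_le_add hsum (hB n)
      _ = relDens (T n) ((⋃ f ∈ F, f • D n) ∪ B) := by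
          rw [relDens_union_of_disjoint _ hdisj, relDens_biUnion_of_pairwiseDisjoint _ _ hFn.1]
      _ ≤ 1 := relDens_le_one _ _
  have hlim : Tendsto (fun η : ℝ ↦ #F * (c - η) + b) (nhdsWithin 0 (Set.Ioi 0))
      (nhds (#F * (c - 0) + b)) :=
    Continuous.tendsto (by fun_prop) 0 |>.mono_left nhdsWithin_le_nhds
  rw [sub_zero] at hlim
  exact le_of_tendsto hlim (eventually_mem_nhdsWithin.mono fun η hη ↦ key hη)

lemma IsFolner.exists_frequently_subset_mul_mul_inv (hT : IsFolner T) {D : ℕ → Set G}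
    (hDB : ∀ n, D n ⊆ B) (hc : 0 < c) (hB : ∀ n, b ≤ relDens (T n) B)
    (hD : ∀ n, c ≤ relDens (T n) (D n)) :
    ∃ F : Finset G, #F * c + b ≤ 1 ∧
      ∀ L : Finset G, ∃ᶠ n in atTop, (L : Set G) ⊆ (insert 1 F : Finset G) * B * (D n)⁻¹ := by
  let Q : Set (Finset G) := {F | ∀ᶠ n in hyperfilter ℕ, IsPacking B (D n) F}
  have hbound {F : Finset G} (hF : F ∈ Q) : #F * c + b ≤ 1 :=
    hT.card_mul_add_le_one (hF.frequently.filter_mono Nat.hyperfilter_le_atTop) hB hD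
  have hfin : (Finset.card '' Q).Finite := by
    refine (Set.finite_Iic ⌊(1 - b) / c⌋₊).subset ?_
    rintro _ ⟨F, hF, rfl⟩
    exact Nat.le_floor ((le_div_iff₀ hc).2 (by linarith [hbound hF]))
  obtain ⟨F, hF, hmax⟩ := Set.Finite.exists_maximalFor' Finset.card Q hfin
    ⟨∅, .of_forall fun n ↦ isPacking_empty B (D n)⟩
  have hcover (g : G) :
      ∀ᶠ n in hyperfilter ℕ, g ∈ (insert 1 F : Finset G) * B * (D n)⁻¹ := by
    by_contra hg
    rw [← Ultrafilter.eventually_not] at hg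
    simp only [mem_mul_mul_inv_iff, Finset.mem_coe, not_exists, not_and, not_not] at hg
    have hins : insert g F ∈ Q := by
      filter_upwards [hF, hg] with n hFn hgn using hFn.insert (hDB n) hgn
    have hgF : g ∈ F := by
      by_contra hgF
      have := hmax hins (Finset.card_le_card (Finset.subset_insert g F))
      rw [Finset.card_insert_of_notMem hgF] at this
      omega
    obtain ⟨n, hn⟩ := hg.exists
    obtain ⟨d, hd⟩ := nonempty_of_relDens_pos (hc.trans_le (hD n))
    exact Set.disjoint_left.1 (hn g (Finset.mem_insert_of_mem hgF))
      (Set.smul_mem_smul_set hd) (Set.smul_mem_smul_set (hDB n hd))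
  refine ⟨F, hbound hF, fun L ↦ ?_⟩
  exact ((eventually_all_finset L).2 fun g _ ↦ hcover g).frequently.filter_mono
    Nat.hyperfilter_le_atTop

lemma IsFolner.exists_forall_le_upperDens_mul_mem [Countable G] (hS : IsFolner S)
    (hT : IsFolner T) (hB : ∀ n, b ≤ relDens (T n) B) (hc : 0 < c) (hcb : c < upperDens S A * b) :
    ∃ s > 0, ∃ F : Finset G, #F * c + b ≤ 1 ∧ ∀ L : Finset G,
      s ≤ upperDens S {x | ∀ g ∈ L, g * x ∈ (insert 1 F : Finset G) * B * A} := by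
  have hX (n : ℕ) : upperDens S A * b - c ≤
      upperDens S {x | c ≤ relDens (T n) (B ∩ x • A⁻¹)} := by
    have h := hS.upperDens_mul_relDens_le A B (T n) hc.le
    have := mul_le_mul_of_nonneg_left (hB n) (upperDens_nonneg S A)
    linarith
  obtain ⟨s, hs, ⟨F, hF⟩, hFs⟩ := exists_forall_le_upperDens (sub_pos.2 hcb) hX
    (fun (F : {F : Finset G // #F * c + b ≤ 1}) (L : Finset G) ↦
      {x | ∀ g ∈ L, g * x ∈ (insert 1 F.1 : Finset G) * B * A}) fun x hx ↦ by
    obtain ⟨F, hF, hFL⟩ :=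
      hT.exists_frequently_subset_mul_mul_inv (fun n ↦ Set.inter_subset_left) hc hB hx
    refine ⟨⟨F, hF⟩, fun L ↦ (hFL L).mono fun n hn g hg ↦ ?_⟩
    obtain ⟨y, hy, d, ⟨-, hd⟩, rfl⟩ := hn hg
    have hdA : d * x n ∈ A := by simpa [Set.mem_smul_set_iff_inv_smul_mem] using hd
    simpa only [mul_assoc] using Set.mul_mem_mul hy hdA
  exact ⟨s, hs, F, hF, hFs⟩

end Folner

lemma exists_lt_one_forall_nat_mul_add_le_one {p : ℝ} (hp : 0 < p) (q : ℝ) :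
    ∃ t : ℝ, 0 < t ∧ t < 1 ∧ ∀ k : ℕ, k * (t ^ 2 * p) + t * q ≤ 1 → k * p + q ≤ 1 := by
  have hex : ∃ k : ℕ, 1 < k * p + q := by
    obtain ⟨k, hk⟩ := exists_nat_gt ((1 - q) / p)
    rw [div_lt_iff₀ hp] at hk
    exact ⟨k, by linarith⟩
  -- the least `k` violating the conclusion already violates the hypothesis for `t` close to `1`
  have hcont : Continuous fun t : ℝ ↦ Nat.find hex * (t ^ 2 * p) + t * q := by fun_prop
  have hlt : ∀ᶠ t in nhds (1 : ℝ), 1 < Nat.find hex * (t ^ 2 * p) + t * q :=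
    hcont.continuousAt.eventually (lt_mem_nhds (by simpa using Nat.find_spec hex))
  obtain ⟨t, ht, ht0, ht1⟩ := ((hlt.filter_mono nhdsWithin_le_nhds).and
    (Ioo_mem_nhdsLT (zero_lt_one' ℝ))).exists
  refine ⟨t, ht0, ht1, fun k hk ↦ ?_⟩
  contrapose! hk
  have hle : (Nat.find hex : ℝ) ≤ k := by exact_mod_cast Nat.find_min' hex hk
  exact ht.trans_le (by gcongr)

theorem stmt15 [Group G] [Countable G] (S : ℕ → Finset G) (hS : IsFolner S)
    (A B : Set G) (α β : ℝ) (hα : 0 < α) (hβ : 0 < β)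
    (hA : α ≤ upperDens S A) (hB : β ≤ banachDens B) :
    ∃ s : ℝ, 0 < s ∧ ∃ E : Finset G, (E.card : ℝ) ≤ 1 / (α * β) - 1 / α + 1 ∧
      ∀ L : Finset G, s ≤ upperDens S {x : G | ∀ g ∈ L, g * x ∈ (E : Set G) * B * A} := by
  obtain ⟨t, ht0, ht1, hround⟩ := exists_lt_one_forall_nat_mul_add_le_one (mul_pos hα hβ) β
  have htβ : t * β < banachDens B := by nlinarith
  obtain ⟨T, hT, hTB⟩ := exists_isFolner_forall_le_relDens (by positivity) htβ
  have hc : t ^ 2 * (α * β) < upperDens S A * (t * β) := calc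
    t ^ 2 * (α * β) = t * (α * (t * β)) := by ring
    _ < α * (t * β) := mul_lt_of_lt_one_left (by positivity) ht1
    _ ≤ upperDens S A * (t * β) := by gcongr
  obtain ⟨s, hs, F, hF, hthick⟩ :=
    hS.exists_forall_le_upperDens_mul_mem hT hTB (by positivity) hc
  refine ⟨s, hs, insert 1 F, ?_, hthick⟩
  calc ((insert 1 F).card : ℝ)
      ≤ F.card + 1 := by exact_mod_cast Finset.card_insert_le 1 F
    _ ≤ (1 - β) / (α * β) + 1 := by
        gcongr
        rw [le_div_iff₀ (by positivity)]
        linarith [hround _ hF]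
    _ = 1 / (α * β) - 1 / α + 1 := by field_simp
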